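/- arXiv:1109.4505 — 2 statements merged into one kernel-verified Lean document; each statement's English description precedes it below -/
import Mathlib

section
/- Let G be a finite group, E a Riesz space with sufficiently many projections, and ρ : G → Aut⁺(E) a positive representation. Then ρ is projection band irreducible if and only if ρ is band irreducible (and either is equivalent to ρ being order indecomposable). -/
/-- A (Riesz) ideal of an ordered real vector space: a submodule `I` such that
`|x| ≤ |y|` and `y ∈ I` imply `x ∈ I`. -/
def IsRieszIdeal {E : Type*} [AddCommGroup E] [Lattice E] [Module ℝ E]
    (I : Submodule ℝ E) : Prop :=
  ∀ x y : E, |x| ≤ |y| → y ∈ I → x ∈ I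

/-- A band: an ideal closed under suprema of its subsets (when they exist in `E`). -/
def IsBand {E : Type*} [AddCommGroup E] [Lattice E] [Module ℝ E]
    (B : Submodule ℝ E) : Prop :=
  IsRieszIdeal B ∧ ∀ (D : Set E) (x : E), D ⊆ (B : Set E) → IsLUB D x → x ∈ B

/-- The disjoint complement of a set `D`. -/
def disjComplement {E : Type*} [AddCommGroup E] [Lattice E] (D : Set E) : Set E :=
  {x : E | ∀ y ∈ D, |x| ⊓ |y| = 0}

/-- A projection band: a band `B` with `E = B ⊕ Bᵈ`. -/
def IsProjectionBand {E : Type*} [AddCommGroup E] [Lattice E] [Module ℝ E]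
    (B : Submodule ℝ E) : Prop :=
  IsBand B ∧ ∀ x : E, ∃ y ∈ B, ∃ z ∈ disjComplement (B : Set E), x = y + z

/-- An order direct sum decomposition `E = L ⊕ M`: every element decomposes uniquely
as a sum of an element of `L` and an element of `M`, and an element is positive iff
both its components are positive. -/
def IsOrderDecomposition {E : Type*} [AddCommGroup E] [Lattice E] [Module ℝ E]
    (L M : Submodule ℝ E) : Prop :=
  (∀ x : E, ∃ y ∈ L, ∃ z ∈ M, x = y + z) ∧
  (∀ x : E, x ∈ L → x ∈ M → x = 0) ∧
  (∀ y z : E, y ∈ L → z ∈ M → (0 ≤ y + z ↔ 0 ≤ y ∧ 0 ≤ z))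

/-- A homomorphism `ρ : G →* (E ≃ₗ[ℝ] E)` is a positive representation when each
`ρ s` is an order isomorphism (hence a lattice automorphism). -/
def IsPositiveRep {E : Type*} [AddCommGroup E] [Lattice E] [Module ℝ E]
    {G : Type*} [Group G] (ρ : G →* (E ≃ₗ[ℝ] E)) : Prop :=
  ∀ (s : G) (x y : E), x ≤ y ↔ ρ s x ≤ ρ s y

/-- A submodule is `ρ`-invariant if it is mapped into itself by every `ρ s`. -/
def InvariantSubmodule {E : Type*} [AddCommGroup E] [Lattice E] [Module ℝ E]
    {G : Type*} [Group G] (ρ : G →* (E ≃ₗ[ℝ] E)) (B : Submodule ℝ E) : Prop :=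
  ∀ (s : G), ∀ x ∈ B, ρ s x ∈ B

/-- `ρ` is order indecomposable if the only `ρ`-invariant order direct sum
decompositions `E = L ⊕ M` are the trivial ones. -/
def OrderIndecomposable {E : Type*} [AddCommGroup E] [Lattice E] [Module ℝ E]
    {G : Type*} [Group G] (ρ : G →* (E ≃ₗ[ℝ] E)) : Prop :=
  ∀ L M : Submodule ℝ E, IsOrderDecomposition L M →
    InvariantSubmodule ρ L → InvariantSubmodule ρ M → L = ⊥ ∨ L = ⊤

/-- `ρ` is projection band irreducible if the only `ρ`-invariant projection bands
are `{0}` and `E`. -/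
def ProjectionBandIrreducible {E : Type*} [AddCommGroup E] [Lattice E] [Module ℝ E]
    {G : Type*} [Group G] (ρ : G →* (E ≃ₗ[ℝ] E)) : Prop :=
  ∀ B : Submodule ℝ E, IsProjectionBand B → InvariantSubmodule ρ B → B = ⊥ ∨ B = ⊤


/-- `ρ` is band irreducible if the only `ρ`-invariant bands are `{0}` and `E`. -/
def BandIrreducible {E : Type*} [AddCommGroup E] [Lattice E] [Module ℝ E]
    {G : Type*} [Group G] (ρ : G →* (E ≃ₗ[ℝ] E)) : Prop :=
  ∀ B : Submodule ℝ E, IsBand B → InvariantSubmodule ρ B → B = ⊥ ∨ B = ⊤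

/-- `E` has sufficiently many projections if every nonzero band contains a nonzero
projection band. -/
def SufficientlyManyProjections (E : Type*) [AddCommGroup E] [Lattice E] [Module ℝ E] : Prop :=
  ∀ B : Submodule ℝ E, IsBand B → B ≠ ⊥ →
    ∃ P : Submodule ℝ E, IsProjectionBand P ∧ P ≠ ⊥ ∧ P ≤ B

/-!
Projection bands are exactly the first summands of order direct sum decompositions, and the second
summand is then the disjoint complement. As lattice automorphisms preserve disjointness, the
disjoint complement of an invariant band is invariant, so projection band irreducibility agrees with
order indecomposability.

For band irreducibility, let `B` be a nonzero invariant band and `P ≤ B` a nonzero projection band.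
A finite sum of projection bands is again a projection band, so the sum of the finitely many
translates `ρ s P` is a nonzero invariant projection band inside `B`, which forces `B = E`.
-/

section LatticeOrderedGroup

variable {E : Type*} [AddCommGroup E] [Lattice E]

/-- Two elements `a` and `b` of a lattice-ordered group are disjoint in the sense of Riesz space
theory when `|a| ⊓ |b| = 0`, so that `disjComplement D` consists of the elements disjoint from all
of `D`. This differs from Mathlib's order-theoretic `Disjoint`, which refers to a least element. -/
def AbsDisjoint (a b : E) : Prop :=
  |a| ⊓ |b| = 0

theorem AbsDisjoint.symm {a b : E} (h : AbsDisjoint a b) : AbsDisjoint b a :=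
  (inf_comm _ _).trans h

theorem absDisjoint_of_mem_disjComplement {D : Set E} {y z : E} (hy : y ∈ D)
    (hz : z ∈ disjComplement D) : AbsDisjoint y z :=
  AbsDisjoint.symm (hz y hy)

variable [IsOrderedAddMonoid E] {a b c x : E}

theorem eq_zero_of_isBot (hx : IsBot x) : x = 0 :=
  le_antisymm (hx 0) (le_add_iff_nonneg_left x |>.mp (hx (x + x)))

theorem add_inf_le_inf_add_inf (ha : 0 ≤ a) (hb : 0 ≤ b) (hc : 0 ≤ c) :
    (a + b) ⊓ c ≤ a ⊓ c + b ⊓ c := by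
  rw [add_inf, inf_add, inf_add]
  refine le_inf (le_inf inf_le_left ?_) (le_inf ?_ ?_)
  · exact inf_le_right.trans (le_add_of_nonneg_right hb)
  · exact inf_le_right.trans (le_add_of_nonneg_left ha)
  · exact inf_le_right.trans (le_add_of_nonneg_left hc)

namespace AbsDisjoint

theorem zero_left (a : E) : AbsDisjoint 0 a := by
  simp [AbsDisjoint, abs_nonneg]

theorem eq_zero (h : AbsDisjoint a a) : a = 0 := by
  have habs : |a| = 0 := by rwa [AbsDisjoint, inf_idem] at h
  exact le_antisymm (habs ▸ le_abs_self a) (neg_nonpos.mp (habs ▸ neg_le_abs a))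

theorem mono_left (h : AbsDisjoint b c) (hab : |a| ≤ |b|) : AbsDisjoint a c :=
  le_antisymm (h ▸ inf_le_inf_right _ hab) (le_inf (abs_nonneg _) (abs_nonneg _))

theorem add_left (ha : AbsDisjoint a c) (hb : AbsDisjoint b c) : AbsDisjoint (a + b) c := by
  refine le_antisymm ?_ (le_inf (abs_nonneg _) (abs_nonneg _))
  calc |a + b| ⊓ |c| ≤ (|a| + |b|) ⊓ |c| := inf_le_inf_right _ (abs_add_le a b)
    _ ≤ |a| ⊓ |c| + |b| ⊓ |c| :=
      add_inf_le_inf_add_inf (abs_nonneg _) (abs_nonneg _) (abs_nonneg _)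
    _ = 0 := by rw [ha, hb, add_zero]

theorem abs_right_le_abs_add (h : AbsDisjoint a b) : |b| ≤ |a + b| := by
  have triangle : |b| ≤ |a + b| + |a| := by
    simpa only [abs_neg, add_neg_cancel_comm] using abs_add_le (a + b) (-a)
  calc |b| ≤ (|a + b| + |a|) ⊓ |b| := le_inf triangle le_rfl
    _ ≤ |a + b| ⊓ |b| + |a| ⊓ |b| :=
      add_inf_le_inf_add_inf (abs_nonneg _) (abs_nonneg _) (abs_nonneg _)
    _ = |a + b| ⊓ |b| := by rw [h, add_zero]
    _ ≤ |a + b| := inf_le_left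

theorem nonneg_left_of_add_nonneg (h : AbsDisjoint a b) (hab : 0 ≤ a + b) : 0 ≤ a := by
  have hneg : -a ≤ |b| := (neg_le_iff_add_nonneg'.mpr hab).trans (le_abs_self b)
  exact neg_nonpos.mp ((le_inf (neg_le_abs a) hneg).trans_eq h)

theorem add_nonneg_iff (h : AbsDisjoint a b) : 0 ≤ a + b ↔ 0 ≤ a ∧ 0 ≤ b :=
  ⟨fun hab => ⟨h.nonneg_left_of_add_nonneg hab,
      h.symm.nonneg_left_of_add_nonneg (add_comm a b ▸ hab)⟩,
    fun hab => add_nonneg hab.1 hab.2⟩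

end AbsDisjoint

end LatticeOrderedGroup

section OrderedModule

variable {𝕜 E : Type*} [AddCommGroup E] [Lattice E]

theorem abs_smul_le [Ring 𝕜] [LinearOrder 𝕜] [IsOrderedAddMonoid 𝕜] [Module 𝕜 E] [PosSMulMono 𝕜 E]
    (r : 𝕜) (a : E) : |r • a| ≤ |r| • |a| := by
  have smul_le (b : E) : r • b ≤ |r| • |b| := by
    rcases le_total 0 r with hr | hr
    · rw [abs_of_nonneg hr]
      exact smul_le_smul_of_nonneg_left (le_abs_self b) hr
    · rw [abs_of_nonpos hr, ← neg_smul_neg r b]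
      exact smul_le_smul_of_nonneg_left (neg_le_abs b) (neg_nonneg.mpr hr)
  refine abs_le'.mpr ⟨smul_le a, ?_⟩
  simpa only [smul_neg, abs_neg] using smul_le (-a)

theorem AbsDisjoint.smul_left [IsOrderedAddMonoid E] [Field 𝕜] [LinearOrder 𝕜]
    [IsStrictOrderedRing 𝕜] [Module 𝕜 E] [IsOrderedModule 𝕜 E] {a b : E} (h : AbsDisjoint a b)
    (r : 𝕜) : AbsDisjoint (r • a) b := by
  set c := max |r| 1
  have hc : 0 < c := lt_max_of_lt_right one_pos
  refine le_antisymm ?_ (le_inf (abs_nonneg _) (abs_nonneg _))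
  calc |r • a| ⊓ |b| ≤ (c • |a|) ⊓ (c • |b|) := by
        refine inf_le_inf ((abs_smul_le r a).trans ?_) ?_
        · exact smul_le_smul_of_nonneg_right (le_max_left _ _) (abs_nonneg a)
        · exact le_smul_of_one_le_left (abs_nonneg b) (le_max_right _ _)
    _ = c • (|a| ⊓ |b|) := ((OrderIso.smulRight hc).map_inf _ _).symm
    _ = 0 := by rw [h, smul_zero]

end OrderedModule

section Decomposition

variable {E : Type*} [AddCommGroup E] [Lattice E] [Module ℝ E]

theorem IsOrderDecomposition.symm {L M : Submodule ℝ E} (h : IsOrderDecomposition L M) :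
    IsOrderDecomposition M L := by
  refine ⟨fun x => ?_, fun x hM hL => h.2.1 x hL hM, fun y z hy hz => ?_⟩
  · obtain ⟨y, hy, z, hz, rfl⟩ := h.1 x
    exact ⟨z, hz, y, hy, add_comm y z⟩
  · rw [add_comm, h.2.2 z y hz hy, and_comm]

variable [IsOrderedAddMonoid E]

section ProjectionBand

variable {B C : Submodule ℝ E}

theorem isRieszIdeal_of_decomposition
    (h : ∀ x : E, ∃ y ∈ B, ∃ z ∈ disjComplement (B : Set E), x = y + z) : IsRieszIdeal B := by
  intro x w hxw hw
  obtain ⟨y, hy, z, hz, rfl⟩ := h x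
  have hyz : AbsDisjoint y z := absDisjoint_of_mem_disjComplement hy hz
  have hzw : |z| ≤ |w| := hyz.abs_right_le_abs_add.trans hxw
  have hz0 : z = 0 := ((absDisjoint_of_mem_disjComplement hw hz).mono_left hzw).eq_zero
  rwa [hz0, add_zero]

theorem mem_of_isLUB_of_decomposition
    (h : ∀ x : E, ∃ y ∈ B, ∃ z ∈ disjComplement (B : Set E), x = y + z)
    {D : Set E} (hD : D ⊆ B) {x : E} (hx : IsLUB D x) : x ∈ B := by
  rcases D.eq_empty_or_nonempty with rfl | ⟨d₀, hd₀⟩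
  · rw [eq_zero_of_isBot (isLUB_empty_iff.mp hx)]
    exact B.zero_mem
  obtain ⟨y, hy, z, hz, rfl⟩ := h x
  have components_le (d : E) (hd : d ∈ D) : 0 ≤ y - d ∧ 0 ≤ z := by
    have hdisj : AbsDisjoint (y - d) z :=
      absDisjoint_of_mem_disjComplement (B.sub_mem hy (hD hd)) hz
    rw [← hdisj.add_nonneg_iff, sub_add_eq_add_sub]
    exact sub_nonneg.mpr (hx.1 hd)
  have hyD : y ∈ upperBounds D := fun d hd => sub_nonneg.mp (components_le d hd).1
  have hz0 : z = 0 := le_antisymm (add_le_iff_nonpos_right y |>.mp (hx.2 hyD))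
    (components_le d₀ hd₀).2
  rwa [hz0, add_zero]

theorem isProjectionBand_of_decomposition
    (h : ∀ x : E, ∃ y ∈ B, ∃ z ∈ disjComplement (B : Set E), x = y + z) : IsProjectionBand B :=
  ⟨⟨isRieszIdeal_of_decomposition h, fun _ _ hD hx => mem_of_isLUB_of_decomposition h hD hx⟩, h⟩

theorem isProjectionBand_bot : IsProjectionBand (⊥ : Submodule ℝ E) := by
  refine isProjectionBand_of_decomposition fun x => ⟨0, zero_mem _, x, ?_, (zero_add x).symm⟩
  rintro _ rfl
  exact (AbsDisjoint.zero_left x).symm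

theorem disjComplement_inter_subset_disjComplement_sup :
    disjComplement (B : Set E) ∩ disjComplement (C : Set E) ⊆
      disjComplement ((B ⊔ C : Submodule ℝ E) : Set E) := by
  rintro z ⟨hB, hC⟩ w hw
  obtain ⟨b, hb, c, hc, rfl⟩ := Submodule.mem_sup.mp hw
  exact ((absDisjoint_of_mem_disjComplement hb hB).add_left
    (absDisjoint_of_mem_disjComplement hc hC)).symm

theorem IsProjectionBand.sup (hB : IsProjectionBand B) (hC : IsProjectionBand C) :
    IsProjectionBand (B ⊔ C) := by
  refine isProjectionBand_of_decomposition fun x => ?_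
  obtain ⟨b, hb, y, hy, rfl⟩ := hB.2 x
  obtain ⟨c, hc, z, hz, rfl⟩ := hC.2 y
  have hzB : z ∈ disjComplement (B : Set E) := fun w hw =>
    AbsDisjoint.mono_left (hy w hw) (absDisjoint_of_mem_disjComplement hc hz).abs_right_le_abs_add
  exact ⟨b + c, Submodule.add_mem_sup hb hc, z,
    disjComplement_inter_subset_disjComplement_sup ⟨hzB, hz⟩, (add_assoc b c z).symm⟩

theorem isProjectionBand_iSup {ι : Type*} [Finite ι] {P : ι → Submodule ℝ E}
    (hP : ∀ i, IsProjectionBand (P i)) : IsProjectionBand (⨆ i, P i) := by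
  have := Fintype.ofFinite ι
  rw [← Finset.sup_univ_eq_iSup]
  exact Finset.sup_induction isProjectionBand_bot (fun _ hB _ hC => hB.sup hC) fun i _ => hP i

end ProjectionBand

section OrderDecomposition

variable {L M : Submodule ℝ E}

namespace IsOrderDecomposition

theorem abs_mem_left (h : IsOrderDecomposition L M) {y : E} (hy : y ∈ L) : |y| ∈ L := by
  obtain ⟨a, ha, b, hb, hab⟩ := h.1 |y|
  have le_component (u : E) (hu : u ∈ L) (huy : u ≤ |y|) : u ≤ a ∧ 0 ≤ b := by
    rw [← sub_nonneg, ← h.2.2 (a - u) b (L.sub_mem ha hu) hb, sub_add_eq_add_sub, ← hab]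
    exact sub_nonneg.mpr huy
  obtain ⟨hya, hb0⟩ := le_component y hy (le_abs_self y)
  have hya' : -y ≤ a := (le_component (-y) (L.neg_mem hy) (neg_le_abs y)).1
  have habs : |y| = a := le_antisymm (abs_le'.mpr ⟨hya, hya'⟩) (hab ▸ le_add_of_nonneg_right hb0)
  rwa [habs]

theorem mem_left_of_nonneg_of_le (h : IsOrderDecomposition L M) {x y : E} (hx : 0 ≤ x)
    (hxy : x ≤ y) (hy : y ∈ L) : x ∈ L := by
  obtain ⟨a, ha, b, hb, rfl⟩ := h.1 x
  have hb_nonneg : 0 ≤ b := ((h.2.2 a b ha hb).mp hx).2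
  have hb_nonpos : 0 ≤ -b := by
    refine ((h.2.2 (y - a) (-b) (L.sub_mem hy ha) (M.neg_mem hb)).mp ?_).2
    rwa [← sub_eq_add_neg, sub_sub, sub_nonneg]
  rwa [le_antisymm (neg_nonneg.mp hb_nonpos) hb_nonneg, add_zero]

theorem absDisjoint (h : IsOrderDecomposition L M) {y z : E} (hy : y ∈ L) (hz : z ∈ M) :
    AbsDisjoint y z := by
  have hnonneg : 0 ≤ |y| ⊓ |z| := le_inf (abs_nonneg y) (abs_nonneg z)
  exact h.2.1 _ (h.mem_left_of_nonneg_of_le hnonneg inf_le_left (h.abs_mem_left hy))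
    (h.symm.mem_left_of_nonneg_of_le hnonneg inf_le_right (h.symm.abs_mem_left hz))

theorem isProjectionBand_left (h : IsOrderDecomposition L M) : IsProjectionBand L := by
  refine isProjectionBand_of_decomposition fun x => ?_
  obtain ⟨y, hy, z, hz, hx⟩ := h.1 x
  exact ⟨y, hy, z, fun w hw => (h.absDisjoint hw hz).symm, hx⟩

end IsOrderDecomposition

variable [IsOrderedModule ℝ E]

/-- The disjoint complement `Dᵈ` of a set in a Riesz space, bundled as a submodule so that it can
serve as a summand of an order direct sum decomposition. -/
def disjComplementSubmodule (D : Set E) : Submodule ℝ E where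
  carrier := disjComplement D
  zero_mem' := fun y _ => AbsDisjoint.zero_left y
  add_mem' := fun ha hb y hy => AbsDisjoint.add_left (ha y hy) (hb y hy)
  smul_mem' := fun r _ ha y hy => AbsDisjoint.smul_left (ha y hy) r

theorem IsProjectionBand.isOrderDecomposition {P : Submodule ℝ E} (hP : IsProjectionBand P) :
    IsOrderDecomposition P (disjComplementSubmodule (P : Set E)) :=
  ⟨hP.2, fun x hx hxd => AbsDisjoint.eq_zero (hxd x hx),
    fun _ _ hy hz => (absDisjoint_of_mem_disjComplement hy hz).add_nonneg_iff⟩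

end OrderDecomposition

end Decomposition

section Representation

variable {E G : Type*} [AddCommGroup E] [Module ℝ E] [Group G]
  {ρ : G →* (E ≃ₗ[ℝ] E)} {B P : Submodule ℝ E}

/-- The submodule generated by the translates of `P` under `ρ`, that is, the smallest `ρ`-invariant
submodule containing `P`. -/
def invariantSpan (ρ : G →* (E ≃ₗ[ℝ] E)) (P : Submodule ℝ E) : Submodule ℝ E :=
  ⨆ s, P.map (ρ s).toLinearMap

theorem le_invariantSpan (ρ : G →* (E ≃ₗ[ℝ] E)) (P : Submodule ℝ E) : P ≤ invariantSpan ρ P :=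
  fun x hx => Submodule.mem_iSup_of_mem 1 ⟨x, hx, by simp⟩

variable [Lattice E]

theorem invariantSubmodule_invariantSpan (ρ : G →* (E ≃ₗ[ℝ] E)) (P : Submodule ℝ E) :
    InvariantSubmodule ρ (invariantSpan ρ P) := by
  intro t
  have hcomap : invariantSpan ρ P ≤ (invariantSpan ρ P).comap (ρ t).toLinearMap := by
    refine iSup_le fun s => ?_
    rintro _ ⟨w, hw, rfl⟩
    exact Submodule.mem_iSup_of_mem (t * s) ⟨w, hw, by simp [map_mul]⟩
  exact hcomap

theorem InvariantSubmodule.invariantSpan_le (hB : InvariantSubmodule ρ B) (hPB : P ≤ B) :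
    invariantSpan ρ P ≤ B :=
  iSup_le fun s => Submodule.map_le_iff_le_comap.mpr fun w hw => hB s w (hPB hw)

theorem IsPositiveRep.map_absDisjoint (hρ : IsPositiveRep ρ) (s : G) {a b : E}
    (h : AbsDisjoint a b) : AbsDisjoint (ρ s a) (ρ s b) := by
  let e : E ≃o E := { (ρ s).toEquiv with map_rel_iff' := (hρ s _ _).symm }
  have map_abs (x : E) : |ρ s x| = ρ s |x| := by
    rw [abs, abs, ← map_neg]
    exact (e.map_sup x (-x)).symm
  calc |ρ s a| ⊓ |ρ s b| = ρ s |a| ⊓ ρ s |b| := by rw [map_abs, map_abs]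
    _ = ρ s (|a| ⊓ |b|) := (e.map_inf _ _).symm
    _ = 0 := by rw [h, map_zero]

theorem InvariantSubmodule.map_mem_disjComplement (hB : InvariantSubmodule ρ B)
    (hρ : IsPositiveRep ρ) (s : G) {z : E} (hz : z ∈ disjComplement (B : Set E)) :
    ρ s z ∈ disjComplement (B : Set E) := by
  intro y hy
  obtain ⟨w, rfl⟩ := (ρ s).surjective y
  have hw : w ∈ B := by simpa using hB s⁻¹ (ρ s w) hy
  exact hρ.map_absDisjoint s (hz w hw)

theorem BandIrreducible.projectionBandIrreducible (h : BandIrreducible ρ) :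
    ProjectionBandIrreducible ρ :=
  fun B hB => h B hB.1

variable [IsOrderedAddMonoid E]

theorem IsProjectionBand.map (hP : IsProjectionBand P) (hρ : IsPositiveRep ρ) (s : G) :
    IsProjectionBand (P.map (ρ s).toLinearMap) := by
  refine isProjectionBand_of_decomposition fun x => ?_
  obtain ⟨x, rfl⟩ := (ρ s).surjective x
  obtain ⟨y, hy, z, hz, rfl⟩ := hP.2 x
  refine ⟨ρ s y, Submodule.mem_map_of_mem hy, ρ s z, ?_, map_add (ρ s) y z⟩
  rintro _ ⟨w, hw, rfl⟩
  exact hρ.map_absDisjoint s (hz w hw)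

theorem IsProjectionBand.invariantSpan [Finite G] (hP : IsProjectionBand P)
    (hρ : IsPositiveRep ρ) : IsProjectionBand (invariantSpan ρ P) :=
  isProjectionBand_iSup fun s => hP.map hρ s

theorem ProjectionBandIrreducible.bandIrreducible [Finite G] (hE : SufficientlyManyProjections E)
    (hρ : IsPositiveRep ρ) (h : ProjectionBandIrreducible ρ) : BandIrreducible ρ := by
  refine fun B hB hinv => or_iff_not_imp_left.mpr fun hB0 => ?_
  obtain ⟨P, hP, hP0, hPB⟩ := hE B hB hB0
  have hspan : invariantSpan ρ P ≠ ⊥ := ne_bot_of_le_ne_bot hP0 (le_invariantSpan ρ P)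
  have htop : invariantSpan ρ P = ⊤ :=
    (h _ (hP.invariantSpan hρ) (invariantSubmodule_invariantSpan ρ P)).resolve_left hspan
  exact top_le_iff.mp (htop ▸ hinv.invariantSpan_le hPB)

theorem ProjectionBandIrreducible.orderIndecomposable (h : ProjectionBandIrreducible ρ) :
    OrderIndecomposable ρ :=
  fun L _ hLM hL _ => h L hLM.isProjectionBand_left hL

theorem OrderIndecomposable.projectionBandIrreducible [IsOrderedModule ℝ E]
    (hρ : IsPositiveRep ρ) (h : OrderIndecomposable ρ) : ProjectionBandIrreducible ρ :=
  fun P hP hinv => h P _ hP.isOrderDecomposition hinv fun s _ hz =>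
    hinv.map_mem_disjComplement hρ s hz

end Representation

/-- For a positive representation of a finite group in a Riesz space with sufficiently
many projections, projection band irreducibility is equivalent to band irreducibility,
and either is equivalent to order indecomposability. -/
theorem stmt2 {G E : Type*} [Group G] [Finite G] [AddCommGroup E] [Lattice E] [Module ℝ E]
    (hadd : ∀ x y z : E, x ≤ y → x + z ≤ y + z)
    (hsmul : ∀ (c : ℝ) (x : E), 0 ≤ c → 0 ≤ x → 0 ≤ c • x)
    (hE : SufficientlyManyProjections E)
    (ρ : G →* (E ≃ₗ[ℝ] E)) (hρ : IsPositiveRep ρ) :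
    (ProjectionBandIrreducible ρ ↔ BandIrreducible ρ) ∧
    (ProjectionBandIrreducible ρ ↔ OrderIndecomposable ρ) := by
  have : IsOrderedAddMonoid E := { add_le_add_left := fun a b h c => hadd a b c h }
  have : IsOrderedModule ℝ E := .of_smul_nonneg fun c hc x hx => hsmul c x hc hx
  exact ⟨⟨fun h => h.bandIrreducible hE hρ, fun h => h.projectionBandIrreducible⟩,
    ⟨fun h => h.orderIndecomposable, fun h => h.projectionBandIrreducible hρ⟩⟩
end

section
/- Let G be a finite group, E a Riesz space, and ρ : G → Aut⁺(E) a positive representation that is principal band irreducible. Then E is Archimedean. -/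
/-- A principal band: the band generated by a single element, i.e. the smallest band
containing some element `x`. -/
def IsPrincipalBand {E : Type*} [AddCommGroup E] [Lattice E] [Module ℝ E]
    (B : Submodule ℝ E) : Prop :=
  IsBand B ∧ ∃ x ∈ B, ∀ C : Submodule ℝ E, IsBand C → x ∈ C → B ≤ C

/-- `ρ` is principal band irreducible if the only `ρ`-invariant principal bands are
`{0}` and `E`. -/
def PrincipalBandIrreducible {E : Type*} [AddCommGroup E] [Lattice E] [Module ℝ E]
    {G : Type*} [Group G] (ρ : G →* (E ≃ₗ[ℝ] E)) : Prop :=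
  ∀ B : Submodule ℝ E, IsPrincipalBand B → InvariantSubmodule ρ B → B = ⊥ ∨ B = ⊤

/-- `E` is Archimedean: if `0 ≤ n • x ≤ y` for all positive integers `n`, then `x = 0`. -/
def RieszArchimedean (E : Type*) [AddCommGroup E] [Lattice E] [Module ℝ E] : Prop :=
  ∀ x y : E, (∀ n : ℕ, 0 < n → 0 ≤ n • x ∧ n • x ≤ y) → x = 0

/-!
For `z ≥ 0`, the band generated by `z` consists of those `a` for which `|a|` is the supremum of its
truncations `|a| ⊓ n • z`. If `z ≥ 0` is fixed by `ρ`, this band is invariant, hence `{0}` or `E`.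
Suppose moreover that `n • z ≤ w` for all `n ≥ 1`. If the band is all of `E`, then `w` is the
supremum of the elements `w ⊓ n • z = n • z`, a set for which `w - z` is also an upper bound; either
way `z = 0`. When `n • x ≤ y` for all `n ≥ 1`, summing over the orbits yields such a fixed
`z = ∑ s, ρ s x` with `w = ∑ s, ρ s y`, and `z = 0` forces `x = 0`.
-/

/-- The element `a` is the supremum of its truncations `a ⊓ n • z`. For `0 ≤ a` and `0 ≤ z`, this
says that `a` lies in the band generated by `z`. -/
def IsTruncationLUB {E : Type*} [AddCommGroup E] [Lattice E] (z a : E) : Prop :=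
  IsLUB (Set.range fun n : ℕ ↦ a ⊓ n • z) a

namespace IsTruncationLUB

variable {E F : Type*} [AddCommGroup E] [Lattice E] [AddCommGroup F] [Lattice F] {z a b : E}

theorem iff_forall_le :
    IsTruncationLUB z a ↔ ∀ t, (∀ n : ℕ, a ⊓ n • z ≤ t) → a ≤ t := by
  have self_mem_upperBounds : a ∈ upperBounds (Set.range fun n : ℕ ↦ a ⊓ n • z) :=
    Set.forall_mem_range.2 fun _ ↦ inf_le_left
  simp only [IsTruncationLUB, IsLUB, IsLeast, self_mem_upperBounds, true_and, mem_lowerBounds,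
    mem_upperBounds, Set.forall_mem_range]

theorem zero (z : E) : IsTruncationLUB z 0 :=
  iff_forall_le.2 fun t ht ↦ by simpa using ht 0

theorem self (z : E) : IsTruncationLUB z z :=
  iff_forall_le.2 fun t ht ↦ by simpa using ht 1

theorem of_isLUB {D : Set E} (hD : ∀ d ∈ D, IsTruncationLUB z d) (ha : IsLUB D a) :
    IsTruncationLUB z a :=
  iff_forall_le.2 fun _ ht ↦ ha.2 fun d hd ↦ iff_forall_le.1 (hD d hd) _ fun n ↦
    (inf_le_inf_right _ (ha.1 hd)).trans (ht n)

theorem sup (ha : IsTruncationLUB z a) (hb : IsTruncationLUB z b) : IsTruncationLUB z (a ⊔ b) :=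
  of_isLUB (by simp [ha, hb]) isLUB_pair

theorem map (f : E ≃+o F) (ha : IsTruncationLUB z a) : IsTruncationLUB (f z) (f a) := by
  have range_eq :
      (Set.range fun n : ℕ ↦ f a ⊓ n • f z) = f '' Set.range fun n : ℕ ↦ a ⊓ n • z := by
    simp only [← Set.range_comp, Function.comp_def, map_inf, map_nsmul]
  rw [IsTruncationLUB, range_eq]
  exact (OrderIsoClass.toOrderIso f).isLUB_image'.2 ha

variable [IsOrderedAddMonoid E]

theorem mono (ha : IsTruncationLUB z a) (hba : b ≤ a) : IsTruncationLUB z b := by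
  refine iff_forall_le.2 fun t ht ↦ ?_
  have truncation_le (n : ℕ) : a ⊓ n • z ≤ t + (a - b) := by
    have shifted_le : a ⊓ n • z - (a - b) ≤ b ⊓ n • z :=
      le_inf ((sub_le_sub_right inf_le_left _).trans_eq (sub_sub_cancel a b))
        ((sub_le_self _ (sub_nonneg.2 hba)).trans inf_le_right)
    exact sub_le_iff_le_add.1 (shifted_le.trans (ht n))
  simpa using sub_le_iff_le_add.2 (iff_forall_le.1 ha _ truncation_le)

theorem add (ha : IsTruncationLUB z a) (hb : IsTruncationLUB z b) : IsTruncationLUB z (a + b) := by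
  refine iff_forall_le.2 fun t ht ↦ (IsLUB.add ha hb).2 ?_
  rintro _ ⟨_, ⟨m, rfl⟩, _, ⟨n, rfl⟩, rfl⟩
  calc a ⊓ m • z + b ⊓ n • z ≤ (a + b) ⊓ (m + n) • z :=
        le_inf (add_le_add inf_le_left inf_le_left)
          ((add_le_add inf_le_right inf_le_right).trans_eq (add_nsmul z m n).symm)
    _ ≤ t := ht (m + n)

theorem nsmul (ha : IsTruncationLUB z a) (n : ℕ) : IsTruncationLUB z (n • a) := by
  induction n with
  | zero => simpa using zero z
  | succ n ih => simpa only [succ_nsmul] using ih.add ha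

theorem nonpos_of_forall_nsmul_le (ha : IsTruncationLUB z a)
    (hza : ∀ n : ℕ, 0 < n → n • z ≤ a) : z ≤ 0 := by
  have le_sub : a ≤ a - z := iff_forall_le.1 ha _ fun n ↦ inf_le_right.trans <| by
    simpa only [le_sub_iff_add_le, ← succ_nsmul] using hza (n + 1) n.succ_pos
  simpa using le_sub

end IsTruncationLUB

theorem abs_smul_le_abs_smul_abs {R M : Type*} [Ring R] [LinearOrder R] [IsOrderedRing R]
    [AddCommGroup M] [Lattice M] [IsOrderedAddMonoid M] [Module R M] [PosSMulMono R M]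
    (c : R) (a : M) : |c • a| ≤ |c| • |a| := by
  rw [abs_le', ← smul_neg]
  rcases le_total 0 c with hc | hc
  · rw [abs_of_nonneg hc]
    exact ⟨smul_le_smul_of_nonneg_left (le_abs_self a) hc,
      smul_le_smul_of_nonneg_left (neg_le_abs a) hc⟩
  · rw [abs_of_nonpos hc, ← neg_smul_neg c a, ← neg_smul_neg c (-a), neg_neg]
    exact ⟨smul_le_smul_of_nonneg_left (neg_le_abs a) (neg_nonneg.2 hc),
      smul_le_smul_of_nonneg_left (le_abs_self a) (neg_nonneg.2 hc)⟩

section PrincipalBand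

variable {E : Type*} [AddCommGroup E] [Lattice E] [Module ℝ E] [IsOrderedAddMonoid E]
  [IsOrderedModule ℝ E]

/-- The principal band generated by `z`, described through truncations; the description is the
intended one only for `0 ≤ z`. -/
def principalBand (z : E) : Submodule ℝ E where
  carrier := {a | IsTruncationLUB z |a|}
  add_mem' ha hb := (IsTruncationLUB.add ha hb).mono (abs_add_le _ _)
  zero_mem' := by simpa using IsTruncationLUB.zero z
  smul_mem' c a ha := by
    obtain ⟨n, hn⟩ := exists_nat_ge |c|
    refine (IsTruncationLUB.nsmul ha n).mono ?_
    calc |c • a| ≤ |c| • |a| := abs_smul_le_abs_smul_abs c a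
      _ ≤ (n : ℝ) • |a| := smul_le_smul_of_nonneg_right hn (abs_nonneg a)
      _ = n • |a| := Nat.cast_smul_eq_nsmul ℝ n |a|

namespace principalBand

variable {z : E}

theorem mem_iff {a : E} : a ∈ principalBand z ↔ IsTruncationLUB z |a| := Iff.rfl

theorem self_mem (hz : 0 ≤ z) : z ∈ principalBand z := by
  simpa only [mem_iff, abs_of_nonneg hz] using IsTruncationLUB.self z

theorem isBand (z : E) : IsBand (principalBand z) := by
  refine ⟨fun x y hxy hy ↦ IsTruncationLUB.mono hy hxy, fun D x hD hx ↦ ?_⟩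
  have pos : IsTruncationLUB z x :=
    .of_isLUB (fun d hd ↦ (mem_iff.1 (hD hd)).mono (le_abs_self d)) hx
  have neg : IsTruncationLUB z (-x) := by
    rcases D.eq_empty_or_nonempty with rfl | ⟨d, hd⟩
    · have x_nonneg : 0 ≤ x := by simpa using isLUB_empty_iff.1 hx (x + x)
      exact (IsTruncationLUB.zero z).mono (neg_nonpos.2 x_nonneg)
    · exact (mem_iff.1 (hD hd)).mono ((neg_le_neg (hx.1 hd)).trans (neg_le_abs d))
  exact pos.sup neg

theorem le_of_isBand (hz : 0 ≤ z) {C : Submodule ℝ E} (hC : IsBand C) (hzC : z ∈ C) :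
    principalBand z ≤ C := by
  obtain ⟨hC_ideal, hC_sup⟩ := hC
  intro a ha
  have truncation_mem (n : ℕ) : |a| ⊓ n • z ∈ C := by
    have hnz : 0 ≤ n • z := nsmul_nonneg hz n
    refine hC_ideal _ (n • z) ?_ (C.nsmul_mem hzC n)
    rw [abs_of_nonneg hnz, abs_of_nonneg (le_inf (abs_nonneg a) hnz)]
    exact inf_le_right
  exact hC_ideal a |a| (abs_abs a).ge (hC_sup _ _ (Set.range_subset_iff.2 truncation_mem) ha)

theorem isPrincipalBand (hz : 0 ≤ z) : IsPrincipalBand (principalBand z) :=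
  ⟨isBand z, z, self_mem hz, fun _ hC hzC ↦ le_of_isBand hz hC hzC⟩

theorem map_mem {F : Type*} [AddCommGroup F] [Lattice F] [Module ℝ F] [IsOrderedAddMonoid F]
    [IsOrderedModule ℝ F] (f : E ≃+o F) {a : E} (ha : a ∈ principalBand z) :
    f a ∈ principalBand (f z) := by
  have abs_map : |f a| = f |a| := by rw [abs, abs, map_sup, map_neg]
  simpa only [mem_iff, abs_map] using IsTruncationLUB.map f ha

end principalBand

end PrincipalBand

section Representation

variable {G E : Type*} [Group G] [AddCommGroup E] [Lattice E] [Module ℝ E]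
  {ρ : G →* (E ≃ₗ[ℝ] E)}

/-- The operator `ρ s` of a positive representation, as an automorphism of the ordered additive
group `E`. -/
def IsPositiveRep.orderAddMonoidIso (hρ : IsPositiveRep ρ) (s : G) : E ≃+o E where
  toAddEquiv := (ρ s).toAddEquiv
  map_le_map_iff' := (hρ s _ _).symm

theorem IsPositiveRep.map_nonneg (hρ : IsPositiveRep ρ) (s : G) {x : E} (hx : 0 ≤ x) :
    0 ≤ ρ s x := by
  simpa using (hρ s 0 x).1 hx

variable [IsOrderedAddMonoid E] [IsOrderedModule ℝ E]

theorem IsPositiveRep.invariantSubmodule_principalBand (hρ : IsPositiveRep ρ) {z : E}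
    (hz : ∀ s, ρ s z = z) : InvariantSubmodule ρ (principalBand z) := by
  intro s a ha
  have image_mem : ρ s a ∈ principalBand (ρ s z) :=
    principalBand.map_mem (hρ.orderAddMonoidIso s) ha
  rwa [hz s] at image_mem

theorem PrincipalBandIrreducible.eq_zero_of_fixed (hirr : PrincipalBandIrreducible ρ)
    (hρ : IsPositiveRep ρ) {z w : E} (hz : 0 ≤ z) (hz_fixed : ∀ s, ρ s z = z)
    (hzw : ∀ n : ℕ, 0 < n → n • z ≤ w) : z = 0 := by
  rcases hirr _ (principalBand.isPrincipalBand hz) (hρ.invariantSubmodule_principalBand hz_fixed)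
    with h_bot | h_top
  · simpa [h_bot] using principalBand.self_mem hz
  · have w_mem : w ∈ principalBand z := h_top ▸ Submodule.mem_top
    have w_nonneg : 0 ≤ w := hz.trans (by simpa using hzw 1 one_pos)
    rw [principalBand.mem_iff, abs_of_nonneg w_nonneg] at w_mem
    exact (w_mem.nonpos_of_forall_nsmul_le hzw).antisymm hz

end Representation

theorem map_sum_orbit {R M G : Type*} [Semiring R] [AddCommMonoid M] [Module R M] [Group G]
    [Fintype G] (ρ : G →* (M ≃ₗ[R] M)) (s : G) (x : M) :
    ρ s (∑ g, ρ g x) = ∑ g, ρ g x := by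
  rw [map_sum]
  exact Fintype.sum_equiv (Equiv.mulLeft s) _ _ fun g ↦ by simp

/-- If a finite group has a principal band irreducible positive representation in a
Riesz space `E`, then `E` is Archimedean. -/
theorem stmt3 {G E : Type*} [Group G] [Finite G] [AddCommGroup E] [Lattice E] [Module ℝ E]
    (hadd : ∀ x y z : E, x ≤ y → x + z ≤ y + z)
    (hsmul : ∀ (c : ℝ) (x : E), 0 ≤ c → 0 ≤ x → 0 ≤ c • x)
    (ρ : G →* (E ≃ₗ[ℝ] E)) (hρ : IsPositiveRep ρ)
    (hirr : PrincipalBandIrreducible ρ) :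
    RieszArchimedean E := by
  have : IsOrderedAddMonoid E := { add_le_add_left := fun a b h c ↦ hadd a b c h }
  have : IsOrderedModule ℝ E := .of_smul_nonneg fun c hc x hx ↦ hsmul c x hc hx
  cases nonempty_fintype G
  intro x y hxy
  have x_nonneg : 0 ≤ x := by simpa using (hxy 1 one_pos).1
  have orbit_nonneg : ∀ s ∈ Finset.univ, 0 ≤ ρ s x := fun s _ ↦ hρ.map_nonneg s x_nonneg
  have nsmul_sum_le : ∀ n : ℕ, 0 < n → n • ∑ s, ρ s x ≤ ∑ s, ρ s y := by
    intro n hn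
    simp only [Finset.smul_sum, ← map_nsmul]
    exact Finset.sum_le_sum fun s _ ↦ (hρ s _ _).1 (hxy n hn).2
  have sum_eq_zero : ∑ s, ρ s x = 0 :=
    hirr.eq_zero_of_fixed hρ (Finset.sum_nonneg orbit_nonneg) (map_sum_orbit ρ · x) nsmul_sum_le
  simpa using (Finset.sum_eq_zero_iff_of_nonneg orbit_nonneg).1 sum_eq_zero 1 (Finset.mem_univ 1)
end
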